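/- arXiv:1801.00204 — 4 statements merged into one kernel-verified Lean document; each statement's English description precedes it below -/
import Mathlib

section
/- Let c ∈ ℝ with -1 < c < 0. Then f(L) ⊆ L, f(M) ⊆ N, f(N) ⊆ P and f(P) ⊆ M. -/
open Set Filter Topology

/-- The map `f(x,y) = (xy + c, x)`. -/
noncomputable def fc (c : ℝ) : ℝ × ℝ → ℝ × ℝ := fun z => (z.1 * z.2 + c, z.1)

/-- `a₁ = (1 - √(1-4c))/2`. -/
noncomputable def a1 (c : ℝ) : ℝ := (1 - Real.sqrt (1 - 4 * c)) / 2

/-- `a₂ = (1 + √(1-4c))/2`. -/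
noncomputable def a2 (c : ℝ) : ℝ := (1 + Real.sqrt (1 - 4 * c)) / 2

/-!
Each of the four regions is a quadrant with sides parallel to the axes on which neither coordinate
changes sign, so `x * y` is monotone or antitone in each variable there and its extreme value is
attained at the corner. The map `f` therefore sends the region into the quadrant whose corner is the
image of its own corner, and these corners are periodic: `(a₂, a₂)` is fixed, while
`(-1, 1 + c) ↦ (-1, -1) ↦ (1 + c, -1) ↦ (-1, 1 + c)` is a 3-cycle.
-/

theorem a2_nonneg (c : ℝ) : 0 ≤ a2 c := by
  unfold a2
  positivity

theorem a2_mul_self_add {c : ℝ} (hc : c ≤ 1 / 4) : a2 c * a2 c + c = a2 c := by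
  have sqrt_mul_sqrt : √(1 - 4 * c) * √(1 - 4 * c) = 1 - 4 * c :=
    Real.mul_self_sqrt (by linarith)
  unfold a2
  linear_combination sqrt_mul_sqrt / 4

theorem mapsTo_fc_prod {c : ℝ} {s t u : Set ℝ} (h : ∀ x ∈ s, ∀ y ∈ t, x * y + c ∈ u) :
    MapsTo (fc c) (s ×ˢ t) (u ×ˢ s) :=
  fun z hz ↦ ⟨h z.1 hz.1 z.2 hz.2, hz.1⟩

section Quadrants

variable (c : ℝ) {a b : ℝ}

theorem mapsTo_fc_Ici_prod_Ici (ha : 0 ≤ a) (hb : 0 ≤ b) :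
    MapsTo (fc c) (Ici a ×ˢ Ici b) (Ici (a * b + c) ×ˢ Ici a) :=
  mapsTo_fc_prod fun _ hx _ hy ↦
    add_le_add_left (mul_le_mul hx hy hb (ha.trans hx)) c

theorem mapsTo_fc_Iic_prod_Ici (ha : a ≤ 0) (hb : 0 ≤ b) :
    MapsTo (fc c) (Iic a ×ˢ Ici b) (Iic (a * b + c) ×ˢ Iic a) :=
  mapsTo_fc_prod fun _ hx _ hy ↦
    add_le_add_left (mul_le_mul_of_nonpos_of_nonneg hx hy ha (hb.trans hy)) c

theorem mapsTo_fc_Iic_prod_Iic (ha : a ≤ 0) (hb : b ≤ 0) :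
    MapsTo (fc c) (Iic a ×ˢ Iic b) (Ici (a * b + c) ×ˢ Iic a) :=
  mapsTo_fc_prod fun _ hx _ hy ↦
    add_le_add_left (mul_le_mul_of_nonpos_of_nonpos hx hy (le_trans hx ha) hb) c

theorem mapsTo_fc_Ici_prod_Iic (ha : 0 ≤ a) (hb : b ≤ 0) :
    MapsTo (fc c) (Ici a ×ˢ Iic b) (Iic (a * b + c) ×ˢ Ici a) :=
  mapsTo_fc_prod fun _ hx _ hy ↦
    add_le_add_left (mul_le_mul_of_nonneg_of_nonpos hx hy ha (le_trans hy hb)) c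

end Quadrants

theorem stmt1_general (c : ℝ) (hc1 : -1 ≤ c) (hc2 : c ≤ 1 / 4) :
    fc c '' (Ici (a2 c) ×ˢ Ici (a2 c)) ⊆ Ici (a2 c) ×ˢ Ici (a2 c) ∧
    fc c '' (Iic (-1 : ℝ) ×ˢ Ici (1 + c)) ⊆ Iic (-1 : ℝ) ×ˢ Iic (-1 : ℝ) ∧
    fc c '' (Iic (-1 : ℝ) ×ˢ Iic (-1 : ℝ)) ⊆ Ici (1 + c) ×ˢ Iic (-1 : ℝ) ∧
    fc c '' (Ici (1 + c) ×ˢ Iic (-1 : ℝ)) ⊆ Iic (-1 : ℝ) ×ˢ Ici (1 + c) := by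
  have one_add_nonneg : 0 ≤ 1 + c := by linarith
  have neg_one_nonpos : (-1 : ℝ) ≤ 0 := by norm_num
  have mapsTo_L := mapsTo_fc_Ici_prod_Ici c (a2_nonneg c) (a2_nonneg c)
  have mapsTo_M := mapsTo_fc_Iic_prod_Ici c neg_one_nonpos one_add_nonneg
  have mapsTo_N := mapsTo_fc_Iic_prod_Iic c neg_one_nonpos neg_one_nonpos
  have mapsTo_P := mapsTo_fc_Ici_prod_Iic c one_add_nonneg neg_one_nonpos
  rw [a2_mul_self_add hc2] at mapsTo_L
  rw [show -1 * (1 + c) + c = -1 by ring] at mapsTo_M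
  rw [show -1 * -1 + c = 1 + c by ring] at mapsTo_N
  rw [show (1 + c) * -1 + c = -1 by ring] at mapsTo_P
  exact ⟨mapsTo_L.image_subset, mapsTo_M.image_subset, mapsTo_N.image_subset,
    mapsTo_P.image_subset⟩

theorem stmt1 (c : ℝ) (hc1 : -1 < c) (hc2 : c < 0) :
    fc c '' (Ici (a2 c) ×ˢ Ici (a2 c)) ⊆ Ici (a2 c) ×ˢ Ici (a2 c) ∧
    fc c '' (Iic (-1 : ℝ) ×ˢ Ici (1 + c)) ⊆ Iic (-1 : ℝ) ×ˢ Iic (-1 : ℝ) ∧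
    fc c '' (Iic (-1 : ℝ) ×ˢ Iic (-1 : ℝ)) ⊆ Ici (1 + c) ×ˢ Iic (-1 : ℝ) ∧
    fc c '' (Ici (1 + c) ×ˢ Iic (-1 : ℝ)) ⊆ Iic (-1 : ℝ) ×ˢ Ici (1 + c) :=
  stmt1_general c hc1.le (by linarith)
end

section
/- Let c ∈ ℝ with -1 < c < 0. If z ∈ 𝓡 \ {p, f(p), f²(p)}, then fⁿ(z) → (a₁,a₁) = α as n → +∞. -/
open Set Filter Topology

/-!
A compact set `S` with `S ⊆ f(S)` and first coordinates in `(-1, 1]` is contained in `{α}`. Indeed,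
let `m` and `N` be the extreme values of the first coordinate on `S`; since `f(x, y)` has second
coordinate `x`, they bound both coordinates. Writing a point realising `N` as an image under `f`
gives `N ≤ m² + c`. Writing a point realising `m` as an image under `f²` gives
`m = v (v w + c) + c` with `m ≤ w` and `m ≤ v ≤ m² + c`, and the right-hand side is at least
`m + (1 + c) (1 + m) (m² - m + c)`. Hence `m² + c ≤ m`, so `m = N = a₁`.

The `ω`-limit set of an orbit that stays in a compact set is such an `S`. The squares
`[m, m² + c]²` with `m` slightly above `-1` are invariant and exhaust `(-1, 1 + c)²`, and `f²` maps
every point of `𝓡` other than `p`, `f(p)`, `f²(p)` into `(-1, 1 + c)²`.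
-/

section OmegaLimit

variable {X : Type*} [TopologicalSpace X] [T2Space X] {f : X → X} {K : Set X} {x : X}

theorem setOfPred_mapClusterPt_iterate_subset_image (hf : Continuous f) (hK : IsCompact K)
    (hx : ∀ n, f^[n] x ∈ K) :
    {y | MapClusterPt y atTop (f^[·] x)} ⊆ f '' {y | MapClusterPt y atTop (f^[·] x)} := by
  intro y hy
  obtain ⟨U, hU, hUy⟩ := mapClusterPt_iff_ultrafilter.1 hy
  obtain ⟨w, -, hw⟩ := hK.ultrafilter_le_nhds (U.map fun n => f^[n - 1] x)
    (tendsto_principal.2 (.of_forall fun n => hx (n - 1)))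
  refine ⟨w, mapClusterPt_iff_ultrafilter.2
    ⟨U.map (· - 1), (tendsto_sub_atTop_nat 1).mono_left hU, hw⟩, ?_⟩
  refine tendsto_nhds_unique (((hf.tendsto w).comp hw).congr' ?_) hUy
  filter_upwards [hU (eventually_ge_atTop 1)] with n hn
  rw [Function.comp_apply, ← Function.iterate_succ_apply' f, Nat.succ_eq_add_one,
    Nat.sub_add_cancel hn]

theorem tendsto_iterate_of_forall_subset_image {a : X} (hf : Continuous f) (hK : IsCompact K)
    (hfK : MapsTo f K K) (hx : x ∈ K)
    (ha : ∀ S ⊆ K, IsCompact S → S ⊆ f '' S → S ⊆ {a}) :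
    Tendsto (fun n => f^[n] x) atTop (𝓝 a) := by
  have orbit_mem (n : ℕ) : f^[n] x ∈ K := hfK.iterate n hx
  have omega_subset : {y | MapClusterPt y atTop (f^[·] x)} ⊆ K := fun y hy =>
    hK.isClosed.mem_of_mapClusterPt hy (.of_forall orbit_mem)
  have omega_compact : IsCompact {y | MapClusterPt y atTop (f^[·] x)} :=
    hK.of_isClosed_subset isClosed_setOfPred_clusterPt omega_subset
  exact hK.tendsto_nhds_of_unique_mapClusterPt (.of_forall orbit_mem) fun y _ hy =>
    ha _ omega_subset omega_compact
      (setOfPred_mapClusterPt_iterate_subset_image hf hK orbit_mem) hy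

end OmegaLimit

theorem continuous_fc (c : ℝ) : Continuous (fc c) := by
  unfold fc
  fun_prop

theorem eq_a1_of_eq_sq_add {c m : ℝ} (hm : m ≤ 1 / 2) (h : m = m ^ 2 + c) : m = a1 c := by
  have sqrt_eq : √(1 - 4 * c) = 1 - 2 * m := by
    rw [show 1 - 4 * c = (1 - 2 * m) ^ 2 by linear_combination 4 * h]
    exact Real.sqrt_sq (by linarith)
  rw [a1, sqrt_eq]
  ring

theorem a2_eq_sq_add {c : ℝ} (hc : c ≤ 1 / 4) : a2 c = a2 c ^ 2 + c := by
  have := Real.sq_sqrt (show 0 ≤ 1 - 4 * c by linarith)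
  unfold a2
  linear_combination -this / 4

theorem one_lt_a2 {c : ℝ} (hc : c < 0) : 1 < a2 c := by
  have : 1 < √(1 - 4 * c) := Real.lt_sqrt_of_sq_lt (by linarith)
  unfold a2
  linarith

theorem one_add_mul_a2_lt_one {c : ℝ} (hc : c < 0) : (1 + c) * a2 c < 1 := by
  have one_lt := one_lt_a2 hc
  have factor : 1 - (1 + c) * a2 c = (a2 c - 1) ^ 2 * (a2 c + 1) := by
    linear_combination a2 c * a2_eq_sq_add (c := c) (by linarith)
  have : 0 < (a2 c - 1) ^ 2 * (a2 c + 1) :=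
    mul_pos (pow_pos (sub_pos.2 one_lt) 2) (by linarith)
  linarith

section Inequalities

variable {c m N u v w : ℝ}

theorem mul_le_sq_of_mem_Icc (hu : u ∈ Icc m (-m)) (hv : v ∈ Icc m (-m)) : u * v ≤ m ^ 2 := by
  nlinarith [mul_nonneg (sub_nonneg.2 hu.1) (sub_nonneg.2 hv.2),
    mul_nonneg (sub_nonneg.2 hu.2) (sub_nonneg.2 hv.1)]

theorem mul_le_mul_of_mem_Icc (hm : m ≤ 0) (hN : 0 ≤ N) (hu : u ∈ Icc m N) (hv : v ∈ Icc m N) :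
    m * N ≤ u * v := by
  rcases le_total 0 u with hu0 | hu0
  · calc m * N ≤ m * u := mul_le_mul_of_nonpos_left hu.2 hm
      _ = u * m := mul_comm m u
      _ ≤ u * v := mul_le_mul_of_nonneg_left hv.1 hu0
  · calc m * N ≤ u * N := mul_le_mul_of_nonneg_right hu.1 hN
      _ ≤ u * v := mul_le_mul_of_nonpos_left hv.2 hu0

theorem sq_add_le_neg (hc : c ≤ 0) (hm : m ∈ Icc (-1) 0) : m ^ 2 + c ≤ -m := by
  nlinarith [mul_nonneg (neg_le_iff_add_nonneg.1 hm.1) (neg_nonneg.2 hm.2)]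

theorem le_neg_of_eq_mul_add (hc : c < 0) (hN : N ≤ 1) (hu : u ∈ Icc m N) (hv : v ∈ Icc m N)
    (h : N = u * v + c) : N ≤ -m := by
  by_contra! hlt
  have hN0 : 0 ≤ N := by linarith [hu.1, hu.2]
  have mul_le : u * v ≤ (-N) ^ 2 :=
    mul_le_sq_of_mem_Icc ⟨by linarith [hu.1], by linarith [hu.2]⟩
      ⟨by linarith [hv.1], by linarith [hv.2]⟩
  have sq_le : (-N) ^ 2 ≤ N := by nlinarith
  linarith

theorem le_sq_add_of_eq_mul_add (hc : c < 0) (hN : N ≤ 1) (hu : u ∈ Icc m N) (hv : v ∈ Icc m N)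
    (h : N = u * v + c) : N ≤ m ^ 2 + c := by
  have subset : Icc m N ⊆ Icc m (-m) := Icc_subset_Icc_right (le_neg_of_eq_mul_add hc hN hu hv h)
  linarith [mul_le_sq_of_mem_Icc (subset hu) (subset hv)]

theorem add_mul_le_mul_mul_add_add (hc : c ≤ 0) (hm : m ∈ Icc (-1) 0)
    (hv : v ∈ Icc m (m ^ 2 + c)) (hw : m ≤ w) :
    m + (1 + c) * (1 + m) * (m ^ 2 - m + c) ≤ v * (v * w + c) + c := by
  have hm1 : 0 ≤ 1 + m := by linarith [hm.1]
  have hvm : 0 ≤ v - m := sub_nonneg.2 hv.1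
  have factor_le : (1 + c) * (m ^ 2 - m + c) ≤ (m ^ 2 - m + c) + (v - m) * (m ^ 2 + c) := by
    nlinarith [mul_nonneg hvm (sq_nonneg m), mul_nonneg (neg_nonneg.2 hc) (sub_nonneg.2 hv.2)]
  have mul_le : m * (m ^ 2 + c) ≤ m * v := mul_le_mul_of_nonpos_left hv.2 hm.2
  calc m + (1 + c) * (1 + m) * (m ^ 2 - m + c)
      = m + (1 + m) * ((1 + c) * (m ^ 2 - m + c)) := by ring
    _ ≤ m + (1 + m) * ((m ^ 2 - m + c) + (v - m) * (m ^ 2 + c)) := by gcongr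
    _ = m + (1 + m) * (m ^ 2 - m + c) + (v - m) * (m ^ 2 + c + m * (m ^ 2 + c)) := by ring
    _ ≤ m + (1 + m) * (m ^ 2 - m + c) + (v - m) * (m ^ 2 + c + m * v) := by gcongr
    _ = v * (v * m + c) + c := by ring
    _ ≤ v * (v * w + c) + c := by nlinarith [mul_nonneg (sq_nonneg v) (sub_nonneg.2 hw)]

theorem sq_add_le_of_eq_mul_mul_add_add (hc1 : -1 < c) (hc2 : c ≤ 0) (hm : m ∈ Ioc (-1) 0)
    (hv : v ∈ Icc m (m ^ 2 + c)) (hw : m ≤ w) (h : m = v * (v * w + c) + c) :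
    m ^ 2 + c ≤ m := by
  have growth_le := add_mul_le_mul_mul_add_add hc2 (Ioc_subset_Icc_self hm) hv hw
  have coeff_pos : 0 < (1 + c) * (1 + m) := mul_pos (by linarith) (by linarith [hm.1])
  have : m ^ 2 - m + c ≤ 0 := nonpos_of_mul_nonpos_right (by linarith) coeff_pos
  linarith

end Inequalities

section Dynamics

variable {c : ℝ}

theorem subset_singleton_of_subset_image_fc (hc1 : -1 < c) (hc2 : c < 0) {S : Set (ℝ × ℝ)}
    (hS : IsCompact S) (hSf : S ⊆ fc c '' S) (hS1 : ∀ z ∈ S, z.1 ∈ Ioc (-1) 1) :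
    S ⊆ {(a1 c, a1 c)} := by
  intro z hz
  obtain ⟨p, hp, p_min⟩ := hS.exists_isMinOn ⟨z, hz⟩ continuousOn_fst
  obtain ⟨q, hq, q_max⟩ := hS.exists_isMaxOn ⟨z, hz⟩ continuousOn_fst
  have fst_mem : ∀ s ∈ S, s.1 ∈ Icc p.1 q.1 := fun s hs => ⟨p_min hs, q_max hs⟩
  have snd_mem : ∀ s ∈ S, s.2 ∈ Icc p.1 q.1 := by
    intro s hs
    obtain ⟨t, ht, rfl⟩ := hSf hs
    exact fst_mem t ht
  obtain ⟨r, hr, hrq⟩ := hSf hq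
  have hqr : q.1 = r.1 * r.2 + c := (congrArg Prod.fst hrq).symm
  have q_le_neg : q.1 ≤ -p.1 :=
    le_neg_of_eq_mul_add hc2 (hS1 q hq).2 (fst_mem r hr) (snd_mem r hr) hqr
  have q_le : q.1 ≤ p.1 ^ 2 + c :=
    le_sq_add_of_eq_mul_add hc2 (hS1 q hq).2 (fst_mem r hr) (snd_mem r hr) hqr
  obtain ⟨t, ht, htp⟩ := hSf hp
  obtain ⟨s, hs, rfl⟩ := hSf ht
  have hps : p.1 = s.1 * (s.1 * s.2 + c) + c := by
    rw [← htp]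
    simp only [fc]
    ring
  have hpq : p.1 ≤ q.1 := p_min hq
  have le_p : p.1 ^ 2 + c ≤ p.1 :=
    sq_add_le_of_eq_mul_mul_add_add hc1 hc2.le ⟨(hS1 p hp).1, by linarith⟩
      ⟨(fst_mem s hs).1, (fst_mem s hs).2.trans q_le⟩ (snd_mem s hs).1 hps
  have p_eq : p.1 = a1 c := eq_a1_of_eq_sq_add (by linarith) (by linarith)
  have q_eq : q.1 = a1 c := by linarith
  rw [p_eq, q_eq, Icc_self] at fst_mem snd_mem
  exact Prod.ext (fst_mem z hz) (snd_mem z hz)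

theorem mapsTo_fc_square (hc : c ≤ 0) {m : ℝ} (hm : m ∈ Icc (-1) 0) (hm2 : 0 ≤ m ^ 2 + c) :
    MapsTo (fc c) (Icc m (m ^ 2 + c) ×ˢ Icc m (m ^ 2 + c))
      (Icc m (m ^ 2 + c) ×ˢ Icc m (m ^ 2 + c)) := by
  rintro ⟨x, y⟩ ⟨hx, hy⟩
  have le_neg := sq_add_le_neg hc hm
  have subset : Icc m (m ^ 2 + c) ⊆ Icc m (-m) := Icc_subset_Icc_right le_neg
  have upper : x * y ≤ m ^ 2 := mul_le_sq_of_mem_Icc (subset hx) (subset hy)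
  have lower : m * (m ^ 2 + c) ≤ x * y := mul_le_mul_of_mem_Icc hm.2 hm2 hx hy
  have gap_nonneg : 0 ≤ m * (m ^ 2 + c) + c - m := by
    rw [show m * (m ^ 2 + c) + c - m = (1 + m) * (m ^ 2 + c - m) by ring]
    exact mul_nonneg (by linarith [hm.1]) (by linarith [hm.2])
  refine ⟨⟨?_, ?_⟩, hx⟩ <;> simp only [fc] <;> linarith

theorem exists_mem_square (hc : -1 < c) {z : ℝ × ℝ}
    (hz : z ∈ Ioo (-1) (1 + c) ×ˢ Ioo (-1) (1 + c)) :
    ∃ m ∈ Ioo (-1) 0, 0 ≤ m ^ 2 + c ∧ z ∈ Icc m (m ^ 2 + c) ×ˢ Icc m (m ^ 2 + c) := by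
  obtain ⟨⟨hx1, hx2⟩, hy1, hy2⟩ := hz
  have tendsto_sq : Tendsto (fun m : ℝ => m ^ 2 + c) (𝓝[>] (-1)) (𝓝 (1 + c)) := by
    have : ContinuousAt (fun m : ℝ => m ^ 2 + c) (-1) := by fun_prop
    simpa [ContinuousAt] using this.mono_left nhdsWithin_le_nhds
  have eventually_lt {a : ℝ} (ha : -1 < a) : ∀ᶠ m in 𝓝[>] (-1 : ℝ), m < a :=
    eventually_nhdsWithin_of_eventually_nhds (eventually_lt_nhds ha)
  obtain ⟨m, hm, hm0, hmx, hmy, h0m, hxm, hym⟩ := (eventually_mem_nhdsWithin.and <|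
    (eventually_lt neg_one_lt_zero).and <| (eventually_lt hx1).and <| (eventually_lt hy1).and <|
    (tendsto_sq.eventually_const_lt (neg_lt_iff_pos_add'.1 hc)).and <|
    (tendsto_sq.eventually_const_lt hx2).and (tendsto_sq.eventually_const_lt hy2)).exists
  exact ⟨m, ⟨hm, hm0⟩, h0m.le, ⟨hmx.le, hxm.le⟩, hmy.le, hym.le⟩

theorem tendsto_iterate_fc_of_mem_Ioo_prod (hc1 : -1 < c) (hc2 : c < 0) {z : ℝ × ℝ}
    (hz : z ∈ Ioo (-1) (1 + c) ×ˢ Ioo (-1) (1 + c)) :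
    Tendsto (fun n => (fc c)^[n] z) atTop (𝓝 (a1 c, a1 c)) := by
  obtain ⟨m, hm, hm2, hzm⟩ := exists_mem_square hc1 hz
  have hm' : m ∈ Icc (-1) 0 := Ioo_subset_Icc_self hm
  have upper_le_one : m ^ 2 + c ≤ 1 := by linarith [sq_add_le_neg hc2.le hm', hm.1]
  refine tendsto_iterate_of_forall_subset_image (continuous_fc c) (isCompact_Icc.prod isCompact_Icc)
    (mapsTo_fc_square hc2.le hm' hm2) hzm fun S hSm hS hSf =>
    subset_singleton_of_subset_image_fc hc1 hc2 hS hSf fun s hs => ?_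
  exact ⟨hm.1.trans_le (hSm hs).1.1, (hSm hs).1.2.trans upper_le_one⟩

theorem fst_fc_mem_Ioo_of_mem_Icc_prod (hc1 : -1 < c) (hc2 : c < 0) {z : ℝ × ℝ}
    (hz : z ∈ Icc (-1) (1 + c) ×ˢ Icc (-1) (1 + c))
    (hz' : z ∉ ({(-1, -1), (1 + c, -1), (-1, 1 + c)} : Set (ℝ × ℝ))) :
    (fc c z).1 ∈ Ioo (-1) (1 + c) := by
  obtain ⟨x, y⟩ := z
  obtain ⟨⟨hx1, hx2⟩, hy1, hy2⟩ := hz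
  simp only [mem_insert_iff, mem_singleton_iff, Prod.mk.injEq, not_or, not_and] at hz'
  obtain ⟨ne_p, ne_fp, ne_ffp⟩ := hz'
  simp only [fc]
  rcases hx1.eq_or_lt with rfl | hx1
  · have := hy1.lt_of_ne' (ne_p rfl)
    have := hy2.lt_of_ne (ne_ffp rfl)
    constructor <;> linarith
  rcases hy1.eq_or_lt with rfl | hy1
  · have := hx2.lt_of_ne fun h => ne_fp h rfl
    constructor <;> linarith
  have upper : x * y < 1 := by
    have abs_x : |x| < 1 := abs_lt.2 ⟨hx1, by linarith⟩
    have abs_y : |y| < 1 := abs_lt.2 ⟨hy1, by linarith⟩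
    refine (le_abs_self _).trans_lt ?_
    rw [abs_mul]
    exact mul_lt_one_of_nonneg_of_lt_one_left (abs_nonneg x) abs_x abs_y.le
  have lower : -(1 + c) < x * y := by
    have neg_one_lt : -1 < min 0 (min x y) := lt_min neg_one_lt_zero (lt_min hx1 hy1)
    have min_mul_le : min 0 (min x y) * (1 + c) ≤ x * y :=
      mul_le_mul_of_mem_Icc (min_le_left _ _) (by linarith)
        ⟨(min_le_right _ _).trans (min_le_left _ _), hx2⟩
        ⟨(min_le_right _ _).trans (min_le_right _ _), hy2⟩
    nlinarith
  constructor <;> linarith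

theorem fst_fc_mem_Ioo_of_mem_Icc_prod_Icc_a2 (hc1 : -1 < c) (hc2 : c < 0) {z : ℝ × ℝ}
    (hz : z ∈ Icc 0 (1 + c) ×ˢ Icc 0 (a2 c)) : (fc c z).1 ∈ Ioo (-1) (1 + c) := by
  obtain ⟨⟨hx0, hx⟩, hy0, hy⟩ := hz
  have upper : z.1 * z.2 < 1 :=
    (mul_le_mul hx hy hy0 (hx0.trans hx)).trans_lt (one_add_mul_a2_lt_one hc2)
  have lower : 0 ≤ z.1 * z.2 := mul_nonneg hx0 hy0
  constructor <;> simp only [fc] <;> linarith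

theorem fc_fc_mem_Ioo_prod (hc1 : -1 < c) (hc2 : c < 0) {z : ℝ × ℝ}
    (hz : z.1 ∈ Icc (-1) (1 + c)) (hfz : (fc c z).1 ∈ Ioo (-1) (1 + c)) :
    fc c (fc c z) ∈ Ioo (-1) (1 + c) ×ˢ Ioo (-1) (1 + c) := by
  refine ⟨fst_fc_mem_Ioo_of_mem_Icc_prod hc1 hc2 ⟨Ioo_subset_Icc_self hfz, hz⟩ ?_, hfz⟩
  rintro (h | h | h)
  · exact hfz.1.ne' (congrArg Prod.fst h)
  · exact hfz.2.ne (congrArg Prod.fst h)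
  · exact hfz.1.ne' (congrArg Prod.fst h)

end Dynamics

theorem stmt3 (c : ℝ) (hc1 : -1 < c) (hc2 : c < 0) (z : ℝ × ℝ)
    (hz : z ∈ (Icc (-1 : ℝ) 0 ×ˢ Icc (0 : ℝ) (1 + c) ∪ Icc (-1 : ℝ) 0 ×ˢ Icc (-1 : ℝ) 0 ∪
          Icc (0 : ℝ) (1 + c) ×ˢ Icc (-1 : ℝ) 0 ∪ Icc (0 : ℝ) (1 + c) ×ˢ Icc (0 : ℝ) (a2 c)) \
        {((-1, -1) : ℝ × ℝ), (1 + c, -1), (-1, 1 + c)}) :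
    Tendsto (fun n => (fc c)^[n] z) atTop (𝓝 (a1 c, a1 c)) := by
  obtain ⟨hz, hz'⟩ := hz
  have left_subset : Icc (-1) 0 ⊆ Icc (-1) (1 + c) := Icc_subset_Icc_right (by linarith)
  have right_subset : Icc 0 (1 + c) ⊆ Icc (-1) (1 + c) := Icc_subset_Icc_left (by linarith)
  have entry : z.1 ∈ Icc (-1) (1 + c) ∧ (fc c z).1 ∈ Ioo (-1) (1 + c) := by
    have of_mem_square (h : z ∈ Icc (-1) (1 + c) ×ˢ Icc (-1) (1 + c)) :=
      And.intro h.1 (fst_fc_mem_Ioo_of_mem_Icc_prod hc1 hc2 h hz')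
    rcases hz with ((hz1 | hz2) | hz3) | hz0
    · exact of_mem_square (prod_mono left_subset right_subset hz1)
    · exact of_mem_square (prod_mono left_subset left_subset hz2)
    · exact of_mem_square (prod_mono right_subset left_subset hz3)
    · exact ⟨right_subset hz0.1, fst_fc_mem_Ioo_of_mem_Icc_prod_Icc_a2 hc1 hc2 hz0⟩
  rw [← tendsto_add_atTop_iff_nat 2]
  exact tendsto_iterate_fc_of_mem_Ioo_prod hc1 hc2 (fc_fc_mem_Ioo_prod hc1 hc2 entry.1 entry.2)
end

section
/- Let c ∈ ℝ with -1 < c < 0. Then K⁺ \ (W^s(α) ∪ W^s(θ)) = W^s(p) ∪ W^s(f(p)) ∪ W^s(f²(p)). -/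
open Set Filter Topology

/-!
Along an orbit the second coordinates satisfy `x (n + 2) = x (n + 1) * x n + c`, and the theorem is
a statement about bounded solutions of this recurrence. The signs of a solution eventually follow
one of three patterns.

* All terms are nonnegative, or the signs repeat `-, -, +`. For an even period `T` of the pattern,
  the differences of `|x (n + T)|` and `|x n|` satisfy a linear recurrence of order two with
  nonnegative coefficients, so their signs are eventually constant along each parity class. Hence
  `x (n + T * k)` is eventually monotone in `k`, and `x` is asymptotic to a `T`-periodic solution
  with the same signs. Such a solution is constant in the first case (`T = 2`) and equal to the
  3-cycle in the second (`T = 6`).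
* All terms lie in `[c, 0]`. Then the differences `d n = x (n + 1) - x n` contract, by the factor
  `-c < 1` every three steps, in the norm `max |d n| |d (n + 1)| |d n + d (n + 1)|`.
-/

section Sequences

lemma tendsto_of_forall_residue {α : Type*} {u : ℕ → α} {l : Filter α} {T : ℕ} (hT : 0 < T)
    (h : ∀ r < T, Tendsto (fun k => u (r + T * k)) atTop l) : Tendsto u atTop l := by
  intro s hs
  have hmem : ∀ᶠ k in atTop, ∀ r ∈ Finset.range T, u (r + T * k) ∈ s :=
    (Finset.eventually_all _).2 fun r hr => h r (Finset.mem_range.1 hr) hs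
  refine mem_map.2 ?_
  filter_upwards [(Nat.tendsto_div_const_atTop hT.ne').eventually hmem] with n hn
  simpa only [Nat.mod_add_div, mem_preimage] using hn (n % T) (Finset.mem_range.2 (Nat.mod_lt n hT))

lemma periodic_apply_add_mul {α : Type*} {u : ℕ → α} {T : ℕ} (h : Function.Periodic u T)
    (n k : ℕ) : u (n + T * k) = u n := by
  simpa only [smul_eq_mul, mul_comm k] using h.nsmul k n

lemma exists_tendsto_of_eventually_le_succ {α : Type*} [ConditionallyCompleteLattice α]
    [TopologicalSpace α] [SupConvergenceClass α] {v : ℕ → α} (hv : BddAbove (range v))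
    (h : ∀ᶠ k in atTop, v k ≤ v (k + 1)) : ∃ l, Tendsto v atTop (𝓝 l) := by
  obtain ⟨K, hK⟩ := eventually_atTop.1 h
  have hmono : Monotone fun k => v (k + K) :=
    monotone_nat_of_le_succ fun k => by simpa only [add_right_comm] using hK (k + K) (by lia)
  have hbdd : BddAbove (range fun k => v (k + K)) :=
    hv.mono (range_comp_subset_range (· + K) v)
  exact ⟨_, (tendsto_add_atTop_iff_nat K).1 (tendsto_atTop_ciSup hmono hbdd)⟩

lemma exists_tendsto_of_eventually_succ_le {α : Type*} [ConditionallyCompleteLattice α]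
    [TopologicalSpace α] [InfConvergenceClass α] {v : ℕ → α} (hv : BddBelow (range v))
    (h : ∀ᶠ k in atTop, v (k + 1) ≤ v k) : ∃ l, Tendsto v atTop (𝓝 l) :=
  exists_tendsto_of_eventually_le_succ (α := αᵒᵈ) hv h

lemma summable_of_add_le_mul {u : ℕ → ℝ} {κ : ℝ} {T : ℕ} (hu : ∀ n, 0 ≤ u n) (hκ : κ < 1)
    (h : ∀ n, u (n + T) ≤ κ * u n) : Summable u := by
  refine summable_of_sum_range_le (c := (∑ i ∈ Finset.range T, u i) / (1 - κ)) hu fun n => ?_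
  rw [le_div_iff₀ (by linarith)]
  have hsum : ∑ i ∈ Finset.range n, u i ≤
      ∑ i ∈ Finset.range T, u i + κ * ∑ i ∈ Finset.range n, u i := calc
    ∑ i ∈ Finset.range n, u i
      ≤ ∑ i ∈ Finset.range (T + n), u i := by
        gcongr
        · exact fun i _ _ => hu i
        · lia
    _ = ∑ i ∈ Finset.range T, u i + ∑ i ∈ Finset.range n, u (T + i) := Finset.sum_range_add ..
    _ ≤ ∑ i ∈ Finset.range T, u i + κ * ∑ i ∈ Finset.range n, u i := by
        rw [Finset.mul_sum]
        gcongr with i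
        simpa only [add_comm T] using h i
  linarith

end Sequences

section PositiveRecurrence

variable {R : Type*} [Ring R] [LinearOrder R] [IsStrictOrderedRing R] {D p q : ℕ → R}

lemma nonneg_of_recurrence (hp : ∀ n, 0 ≤ p n) (hq : ∀ n, 0 ≤ q n)
    (hD : ∀ n, D (n + 2) = p n * D n + q n * D (n + 1)) {N : ℕ} (hN : 0 ≤ D N)
    (hN' : 0 ≤ D (N + 1)) {n : ℕ} (hn : N ≤ n) : 0 ≤ D n := by
  suffices h : 0 ≤ D n ∧ 0 ≤ D (n + 1) from h.1
  induction n, hn using Nat.le_induction with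
  | base => exact ⟨hN, hN'⟩
  | succ n _ ih =>
    refine ⟨ih.2, ?_⟩
    rw [hD]
    exact add_nonneg (mul_nonneg (hp n) ih.1) (mul_nonneg (hq n) ih.2)

lemma eventually_nonneg_or_eventually_nonpos_of_recurrence (hp : ∀ n, 0 ≤ p n)
    (hq : ∀ n, 0 ≤ q n) (hD : ∀ n, D (n + 2) = p n * D n + q n * D (n + 1)) (r : ℕ) :
    (∀ᶠ k in atTop, 0 ≤ D (r + 2 * k)) ∨ ∀ᶠ k in atTop, D (r + 2 * k) ≤ 0 := by
  by_cases hpos : ∃ N, 0 ≤ D N ∧ 0 ≤ D (N + 1)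
  · obtain ⟨N, hN, hN'⟩ := hpos
    left
    filter_upwards [eventually_ge_atTop N] with k hk
    exact nonneg_of_recurrence hp hq hD hN hN' (by lia)
  by_cases hneg : ∃ N, D N ≤ 0 ∧ D (N + 1) ≤ 0
  · obtain ⟨N, hN, hN'⟩ := hneg
    right
    filter_upwards [eventually_ge_atTop N] with k hk
    have hnegD : ∀ n, -D (n + 2) = p n * -D n + q n * -D (n + 1) := fun n => by
      rw [hD]
      noncomm_ring
    exact neg_nonneg.1 <| nonneg_of_recurrence (D := fun n => -D n) hp hq hnegD
      (neg_nonneg.2 hN) (neg_nonneg.2 hN') (by lia)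
  -- Otherwise consecutive terms always have strictly opposite signs.
  push Not at hpos hneg
  rcases le_total 0 (D r) with hr | hr
  · refine .inl (.of_forall fun k => ?_)
    induction k with
    | zero => exact hr
    | succ k ih => exact (hneg _ (hpos _ ih).le).le
  · refine .inr (.of_forall fun k => ?_)
    induction k with
    | zero => exact hr
    | succ k ih => exact (hpos _ (hneg _ ih).le).le

end PositiveRecurrence

lemma exists_tendsto_of_difference_recurrence {y p q : ℕ → ℝ} {P : ℕ} (hP : P ≠ 0)
    (hy : Bornology.IsBounded (range y)) (hp : ∀ n, 0 ≤ p n) (hq : ∀ n, 0 ≤ q n)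
    (hD : ∀ n, y (n + 2 + 2 * P) - y (n + 2) =
      p n * (y (n + 2 * P) - y n) + q n * (y (n + 1 + 2 * P) - y (n + 1))) (r : ℕ) :
    ∃ l, Tendsto (fun k => y (r + 2 * P * k)) atTop (𝓝 l) := by
  have hsub : range (fun k => y (r + 2 * P * k)) ⊆ range y :=
    range_comp_subset_range (fun k => r + 2 * P * k) y
  have hmul : Tendsto (P * ·) atTop atTop := tendsto_id.const_mul_atTop' (Nat.pos_of_ne_zero hP)
  have hsucc : ∀ k, r + 2 * P * (k + 1) = r + 2 * (P * k) + 2 * P := fun k => by ring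
  rcases eventually_nonneg_or_eventually_nonpos_of_recurrence
    (D := fun n => y (n + 2 * P) - y n) hp hq hD r with h | h
  · refine exists_tendsto_of_eventually_le_succ (hy.bddAbove.mono hsub) ?_
    filter_upwards [hmul.eventually h] with k hk
    rw [hsucc, mul_assoc]
    exact sub_nonneg.1 hk
  · refine exists_tendsto_of_eventually_succ_le (hy.bddBelow.mono hsub) ?_
    filter_upwards [hmul.eventually h] with k hk
    rw [hsucc, mul_assoc]
    exact sub_nonpos.1 hk

/-- Solutions of the scalar form `x (n + 2) = x (n + 1) * x n + c` of the dynamics: `x` solves it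
iff the points `(x (n + 1), x n)` form an orbit of `fc c`. -/
def IsOrbit (c : ℝ) (x : ℕ → ℝ) : Prop := ∀ n, x (n + 2) = x (n + 1) * x n + c

/-- The scalar orbit `-1, -1, 1 + c, -1, -1, 1 + c, …` of the 3-cycle. The sign pattern of the
3-cycle is the instance `c = 0`. -/
def threeCycle (c : ℝ) (n : ℕ) : ℝ := if n % 3 = 2 then 1 + c else -1

/-- The possible behaviours of bounded scalar orbits: convergence, necessarily to a fixed point, or
convergence to the 3-cycle with some phase `r`. -/
def ConvergesToCycle (c : ℝ) (x : ℕ → ℝ) : Prop :=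
  (∃ a, Tendsto x atTop (𝓝 a)) ∨ ∃ r, Tendsto (fun n => x n - threeCycle c (n + r)) atTop (𝓝 0)

namespace IsOrbit

variable {c : ℝ} {x y : ℕ → ℝ}

lemma shift (hx : IsOrbit c x) (N : ℕ) : IsOrbit c fun n => x (n + N) := fun n => by
  simpa only [add_right_comm] using hx (n + N)

lemma ext (hx : IsOrbit c x) (hy : IsOrbit c y) (h₀ : x 0 = y 0) (h₁ : x 1 = y 1) : x = y := by
  funext n
  suffices h : x n = y n ∧ x (n + 1) = y (n + 1) from h.1
  induction n with
  | zero => exact ⟨h₀, h₁⟩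
  | succ n ih => exact ⟨ih.2, by rw [hx, hy, ih.1, ih.2]⟩

lemma iterate_fc (hx : IsOrbit c x) (n : ℕ) : (fc c)^[n] (x 1, x 0) = (x (n + 1), x n) := by
  induction n with
  | zero => rfl
  | succ n ih => rw [Function.iterate_succ_apply', ih, hx]; rfl

lemma eq_mul_self_add_of_tendsto (hx : IsOrbit c x) {a : ℝ} (h : Tendsto x atTop (𝓝 a)) :
    a = a * a + c := by
  have h₁ : Tendsto (fun n => x (n + 1)) atTop (𝓝 a) := (tendsto_add_atTop_iff_nat 1).2 h
  have h₂ : Tendsto (fun n => x (n + 2)) atTop (𝓝 a) := (tendsto_add_atTop_iff_nat 2).2 h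
  exact tendsto_nhds_unique h₂ (((h₁.mul h).add_const c).congr fun n => (hx n).symm)

/-- A sign pattern compatible with the recurrence is a `±1`-valued solution `s` for `c = 0`. -/
lemma exists_tendsto_of_sign (hx : IsOrbit c x) (hb : Bornology.IsBounded (range x)) {s : ℕ → ℝ}
    (hs : IsOrbit 0 s) (hs1 : ∀ n, s n * s n = 1) {P : ℕ} (hP : P ≠ 0)
    (hper : Function.Periodic s (2 * P)) (hsx : ∀ n, 0 ≤ s n * x n) (r : ℕ) :
    ∃ l, Tendsto (fun k => x (r + 2 * P * k)) atTop (𝓝 l) := by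
  have hbdd : Bornology.IsBounded (range fun n => s n * x n) := by
    obtain ⟨M, hM⟩ := isBounded_iff_forall_norm_le.1 hb
    refine isBounded_iff_forall_norm_le.2 ⟨M, forall_mem_range.2 fun n => ?_⟩
    have hsn : ‖s n‖ = 1 := by
      rcases mul_self_eq_one_iff.1 (hs1 n) with h | h <;> simp [h]
    rw [norm_mul, hsn, one_mul]
    exact hM _ (mem_range_self n)
  have hdiff : ∀ n, s (n + 2 + 2 * P) * x (n + 2 + 2 * P) - s (n + 2) * x (n + 2) =
      s (n + 1 + 2 * P) * x (n + 1 + 2 * P) * (s (n + 2 * P) * x (n + 2 * P) - s n * x n) +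
        s n * x n * (s (n + 1 + 2 * P) * x (n + 1 + 2 * P) - s (n + 1) * x (n + 1)) := fun n => by
    have hxP := hx.shift (2 * P) n
    simp only [hper _, hs n, hx n, hxP]
    ring
  obtain ⟨l, hl⟩ := exists_tendsto_of_difference_recurrence hP hbdd (fun n => hsx (n + 1 + 2 * P))
    hsx hdiff r
  refine ⟨s r * l, (hl.const_mul (s r)).congr fun k => ?_⟩
  rw [periodic_apply_add_mul hper, ← mul_assoc, hs1, one_mul]

lemma exists_periodic_of_sign (hx : IsOrbit c x) (hb : Bornology.IsBounded (range x)) {s : ℕ → ℝ}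
    (hs : IsOrbit 0 s) (hs1 : ∀ n, s n * s n = 1) {P : ℕ} (hP : P ≠ 0)
    (hper : Function.Periodic s (2 * P)) (hsx : ∀ n, 0 ≤ s n * x n) :
    ∃ L, IsOrbit c L ∧ Function.Periodic L (2 * P) ∧ (∀ n, 0 ≤ s n * L n) ∧
      Tendsto (fun n => x n - L n) atTop (𝓝 0) := by
  choose L hL using hx.exists_tendsto_of_sign hb hs hs1 hP hper hsx
  have hLper : Function.Periodic L (2 * P) := fun n => by
    refine tendsto_nhds_unique (hL (n + 2 * P)) ?_
    refine ((tendsto_add_atTop_iff_nat 1).2 (hL n)).congr fun k => ?_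
    congr 1
    ring
  have hLorbit : IsOrbit c L := fun n => by
    refine tendsto_nhds_unique (hL (n + 2)) ?_
    exact (((hL (n + 1)).mul (hL n)).add_const c).congr fun k =>
      (hx.shift (2 * P * k) n).symm
  refine ⟨L, hLorbit, hLper, fun n => ?_, ?_⟩
  · refine ge_of_tendsto' ((hL n).const_mul (s n)) fun k => ?_
    rw [← periodic_apply_add_mul hper n k]
    exact hsx _
  · refine tendsto_of_forall_residue (T := 2 * P) (by lia) fun r _ => ?_
    simpa only [periodic_apply_add_mul hLper, sub_self] using (hL r).sub_const (L r)

lemma exists_tendsto_of_nonneg (hx : IsOrbit c x) (hb : Bornology.IsBounded (range x))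
    (h : ∀ n, 0 ≤ x n) : ∃ a, Tendsto x atTop (𝓝 a) := by
  obtain ⟨L, hL, hper, -, hlim⟩ := hx.exists_periodic_of_sign hb (s := fun _ => 1) (P := 1)
    (fun _ => by norm_num) (fun _ => by norm_num) one_ne_zero (fun _ => rfl) (by simpa using h)
  have hstep : ∀ n, L (n + 1) = L n := fun n => by
    have h₂ := hL n
    have h₃ := hL (n + 1)
    have hn : L (n + 2) = L n := hper n
    have hn' : L (n + 1 + 2) = L (n + 1) := hper (n + 1)
    rw [hn] at h₂
    rw [hn', hn] at h₃
    linarith [mul_comm (L (n + 1)) (L n)]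
  have hconst : ∀ n, L n = L 0 := fun n => by
    induction n with
    | zero => rfl
    | succ n ih => rw [hstep, ih]
  exact ⟨L 0, by simpa [hconst] using hlim.add_const (L 0)⟩

end IsOrbit

section ThreeCycle

variable {c : ℝ} {x : ℕ → ℝ}

lemma isOrbit_threeCycle (c : ℝ) : IsOrbit c (threeCycle c) := fun n => by
  unfold threeCycle
  obtain h | h | h : n % 3 = 0 ∨ n % 3 = 1 ∨ n % 3 = 2 := by lia
  all_goals simp [Nat.add_mod, h]

lemma periodic_threeCycle (c : ℝ) : Function.Periodic (threeCycle c) 3 := fun n => by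
  simp [threeCycle]

lemma threeCycle_zero_mul_self (n : ℕ) : threeCycle 0 n * threeCycle 0 n = 1 := by
  unfold threeCycle
  split_ifs <;> norm_num

lemma threeCycle_add_mod (c : ℝ) (n r : ℕ) : threeCycle c (n + r % 3) = threeCycle c (n + r) := by
  simp [threeCycle]

lemma isBounded_range_threeCycle (c : ℝ) : Bornology.IsBounded (range (threeCycle c)) := by
  refine (Set.toFinite {1 + c, -1}).isBounded.subset (range_subset_iff.2 fun n => ?_)
  unfold threeCycle
  split_ifs <;> simp

lemma not_tendsto_threeCycle (hc : c ≠ -2) (a : ℝ) : ¬ Tendsto (threeCycle c) atTop (𝓝 a) := by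
  intro h
  have hval : ∀ r, threeCycle c r = a := fun r => by
    have hr : Tendsto (fun k : ℕ => r + 3 * k) atTop atTop :=
      tendsto_atTop_mono (fun k => show k ≤ r + 3 * k by lia) tendsto_id
    have hconst : (threeCycle c ∘ fun k => r + 3 * k) = fun _ => threeCycle c r :=
      funext (periodic_apply_add_mul (periodic_threeCycle c) r)
    exact tendsto_nhds_unique tendsto_const_nhds (hconst ▸ h.comp hr)
  have h₀ := hval 0
  have h₂ := hval 2
  norm_num [threeCycle] at h₀ h₂
  exact hc (by linarith)

lemma forall_zero_le_threeCycle_zero_mul_iff :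
    (∀ n, 0 ≤ threeCycle 0 n * x n) ↔
      ∀ k, x (3 * k) ≤ 0 ∧ x (3 * k + 1) ≤ 0 ∧ 0 ≤ x (3 * k + 2) := by
  constructor
  · intro h k
    exact ⟨by simpa [threeCycle] using h (3 * k),
      by simpa [threeCycle, Nat.add_mod] using h (3 * k + 1),
      by simpa [threeCycle, Nat.add_mod] using h (3 * k + 2)⟩
  · intro h n
    obtain ⟨h₀, h₁, h₂⟩ := h (n / 3)
    unfold threeCycle
    obtain hn | hn | hn : n = 3 * (n / 3) ∨ n = 3 * (n / 3) + 1 ∨ n = 3 * (n / 3) + 2 := by lia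
    all_goals rw [hn]; simpa [Nat.add_mod]

end ThreeCycle

lemma ConvergesToCycle.of_shift {c : ℝ} {x : ℕ → ℝ} (N : ℕ)
    (h : ConvergesToCycle c fun n => x (n + N)) : ConvergesToCycle c x := by
  rcases h with ⟨a, h⟩ | ⟨r, h⟩
  · exact .inl ⟨a, (tendsto_add_atTop_iff_nat N).1 h⟩
  · refine .inr ⟨r + 2 * N, (tendsto_add_atTop_iff_nat N).1 (h.congr fun n => ?_)⟩
    rw [show n + N + (r + 2 * N) = n + r + 3 * N by ring,
      periodic_apply_add_mul (periodic_threeCycle c)]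

namespace IsOrbit

variable {c : ℝ} {x L : ℕ → ℝ}

section SixPeriodic

lemma one_add_mul_sub_of_periodic_six (hL : IsOrbit c L) (hper : Function.Periodic L 6) :
    (1 + L 2 * L 5) * (L 3 - L 0) = c * (L 2 - L 5) := by
  have h₃ : L 3 = L 2 * L 1 + c := hL 1
  have h₄ : L 4 = L 3 * L 2 + c := hL 2
  have h₀ : L 0 = L 5 * L 4 + c := (hper 0).symm.trans (hL 4)
  have h₁ : L 1 = L 0 * L 5 + c := by rw [← hper 1, ← hper 0]; exact hL 5
  linear_combination h₃ - h₀ + L 2 * h₁ - L 5 * h₄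

-- If `L 2 < L 5`, monotonicity of the recurrence gives `L 0 ≤ L 3`, `L 1 ≤ L 4`, `L 5 ≤ L 2`.
lemma apply_five_le_apply_two_of_periodic_six (hL : IsOrbit c L) (hc : c ≤ 0)
    (hper : Function.Periodic L 6) (hsign : ∀ n, 0 ≤ threeCycle 0 n * L n) : L 5 ≤ L 2 := by
  by_contra! hlt
  have hsign' := forall_zero_le_threeCycle_zero_mul_iff.1 hsign
  obtain ⟨hneg₀, hneg₁, hpos₂⟩ : L 0 ≤ 0 ∧ L 1 ≤ 0 ∧ 0 ≤ L 2 := hsign' 0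
  obtain ⟨hneg₃, -, hpos₅⟩ : L 3 ≤ 0 ∧ L 4 ≤ 0 ∧ 0 ≤ L 5 := hsign' 1
  have h₀₃ : L 0 ≤ L 3 := by
    refine sub_nonneg.1 (nonneg_of_mul_nonneg_right ?_ (by positivity : 0 < 1 + L 2 * L 5))
    rw [hL.one_add_mul_sub_of_periodic_six hper]
    exact mul_nonneg_of_nonpos_of_nonpos hc (sub_nonpos.2 hlt.le)
  have h₁₄ : L 1 ≤ L 4 := calc
    L 1 = L 0 * L 5 + c := by rw [← hper 1, ← hper 0]; exact hL 5
    _ ≤ L 0 * L 2 + c := by linarith [mul_le_mul_of_nonpos_left hlt.le hneg₀]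
    _ ≤ L 3 * L 2 + c := by gcongr
    _ = L 4 := (hL 2).symm
  have h₅₂ : L 5 ≤ L 2 := calc
    L 5 = L 4 * L 3 + c := hL 3
    _ ≤ L 1 * L 3 + c := by linarith [mul_le_mul_of_nonpos_right h₁₄ hneg₃]
    _ ≤ L 1 * L 0 + c := by linarith [mul_le_mul_of_nonpos_left h₀₃ hneg₁]
    _ = L 2 := (hL 0).symm
  exact hlt.not_ge h₅₂

lemma apply_three_eq_and_apply_four_eq_of_periodic_six (hL : IsOrbit c L) (hc : c ≤ 0)
    (hper : Function.Periodic L 6) (hsign : ∀ n, 0 ≤ threeCycle 0 n * L n) :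
    L 3 = L 0 ∧ L 4 = L 1 := by
  have hpos₂ : 0 ≤ L 2 := (forall_zero_le_threeCycle_zero_mul_iff.1 hsign 0).2.2
  have h₂₅ : L 2 ≤ L 5 := by
    have hper' : Function.Periodic (fun n => L (n + 3)) 6 := fun n => by
      simpa only [add_right_comm] using hper (n + 3)
    rw [← hper 2]
    refine (hL.shift 3).apply_five_le_apply_two_of_periodic_six hc hper' fun n => ?_
    rw [← periodic_threeCycle 0 n]
    exact hsign (n + 3)
  have h₅₂ : L 5 = L 2 :=
    (hL.apply_five_le_apply_two_of_periodic_six hc hper hsign).antisymm h₂₅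
  have h₃₀ : L 3 = L 0 := by
    have h := hL.one_add_mul_sub_of_periodic_six hper
    rw [h₅₂, sub_self, mul_zero] at h
    exact sub_eq_zero.1 ((mul_eq_zero.1 h).resolve_left (by positivity))
  refine ⟨h₃₀, ?_⟩
  calc
    L 4 = L 3 * L 2 + c := hL 2
    _ = L 6 * L 5 + c := by rw [h₃₀, h₅₂, show L 6 = L 0 from hper 0]
    _ = L 1 := by rw [← hper 1]; exact (hL 5).symm

lemma eq_threeCycle_of_periodic_six (hL : IsOrbit c L) (hc : c < 0)
    (hper : Function.Periodic L 6) (hsign : ∀ n, 0 ≤ threeCycle 0 n * L n) :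
    L = threeCycle c := by
  obtain ⟨h₃₀, h₄₁⟩ := hL.apply_three_eq_and_apply_four_eq_of_periodic_six hc.le hper hsign
  obtain ⟨-, hneg₁, hpos₂⟩ : L 0 ≤ 0 ∧ L 1 ≤ 0 ∧ 0 ≤ L 2 :=
    forall_zero_le_threeCycle_zero_mul_iff.1 hsign 0
  have h₂ : L 2 = L 1 * L 0 + c := hL 0
  have h₀ : L 0 = L 2 * L 1 + c := h₃₀.symm.trans (hL 1)
  have h₁ : L 1 = L 0 * L 2 + c := by rw [← h₃₀, ← h₄₁]; exact hL 2
  have h₁₀ : L 1 = L 0 := by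
    have h : (1 + L 2) * (L 1 - L 0) = 0 := by linear_combination h₁ - h₀
    exact sub_eq_zero.1 ((mul_eq_zero.1 h).resolve_left (by positivity))
  have hneg₀ : L 0 < 0 := by
    linarith [mul_nonpos_of_nonneg_of_nonpos hpos₂ hneg₁]
  have h₀' : L 0 = -1 := by
    have h : (L 2 - L 0) * (L 0 + 1) = 0 := by
      rw [h₁₀] at h₂ h₀
      linear_combination h₂ - h₀
    exact eq_neg_of_add_eq_zero_left
      ((mul_eq_zero.1 h).resolve_left (sub_pos.2 (hneg₀.trans_le hpos₂)).ne')
  exact hL.ext (isOrbit_threeCycle c) h₀' (h₁₀.trans h₀')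

end SixPeriodic

lemma tendsto_sub_threeCycle (hx : IsOrbit c x) (hc : c < 0)
    (hb : Bornology.IsBounded (range x)) (hsign : ∀ n, 0 ≤ threeCycle 0 n * x n) :
    Tendsto (fun n => x n - threeCycle c n) atTop (𝓝 0) := by
  have hper : Function.Periodic (threeCycle 0) (2 * 3) := by
    simpa using (periodic_threeCycle 0).nsmul 2
  obtain ⟨L, hL, hLper, hLsign, hlim⟩ := hx.exists_periodic_of_sign hb (isOrbit_threeCycle 0)
    threeCycle_zero_mul_self three_ne_zero hper hsign
  rwa [hL.eq_threeCycle_of_periodic_six hc hLper hLsign] at hlim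

end IsOrbit

section InvariantBox

/-- The size of the pair of consecutive differences `d n`, `d (n + 1)`, `d n = x (n + 1) - x n`, in
the norm with hexagonal unit ball `|u|, |v|, |u + v| ≤ 1`. The recurrence
`d (n + 2) = x (n + 1) * (d n + d (n + 1))` does not expand this norm when `x` has values in
`[-1, 0]`. -/
def hexNorm (x : ℕ → ℝ) (n : ℕ) : ℝ :=
  max |x (n + 1) - x n| (max |x (n + 2) - x (n + 1)| |x (n + 2) - x n|)

lemma hexNorm_le_iff {x : ℕ → ℝ} {n : ℕ} {N : ℝ} :
    hexNorm x n ≤ N ↔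
      |x (n + 1) - x n| ≤ N ∧ |x (n + 2) - x (n + 1)| ≤ N ∧ |x (n + 2) - x n| ≤ N := by
  simp only [hexNorm, max_le_iff]

lemma mul_add_mem_Icc {c u v : ℝ} (hc : -1 ≤ c) (hu : u ∈ Icc c 0) (hv : v ∈ Icc c 0) :
    u * v + c ∈ Icc c 0 := by
  obtain ⟨hcu, hu⟩ := hu
  obtain ⟨hcv, hv⟩ := hv
  constructor <;> nlinarith

namespace IsOrbit

variable {c : ℝ} {x : ℕ → ℝ}

lemma mem_Icc (hx : IsOrbit c x) (hc : -1 ≤ c) (h₀ : x 0 ∈ Icc c 0) (h₁ : x 1 ∈ Icc c 0)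
    (n : ℕ) : x n ∈ Icc c 0 := by
  suffices h : x n ∈ Icc c 0 ∧ x (n + 1) ∈ Icc c 0 from h.1
  induction n with
  | zero => exact ⟨h₀, h₁⟩
  | succ n ih => exact ⟨ih.2, by rw [hx]; exact mul_add_mem_Icc hc ih.2 ih.1⟩

lemma sub_eq_mul_sub (hx : IsOrbit c x) (n : ℕ) :
    x (n + 3) - x (n + 2) = x (n + 1) * (x (n + 2) - x n) := by
  rw [hx (n + 1), hx n]
  ring

lemma abs_sub_le_mul_hexNorm (hx : IsOrbit c x) (hbox : ∀ n, x n ∈ Icc c 0) (n : ℕ) :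
    |x (n + 3) - x (n + 2)| ≤ -c * hexNorm x n := by
  obtain ⟨hl, hu⟩ := hbox (n + 1)
  rw [hx.sub_eq_mul_sub, abs_mul, abs_of_nonpos hu]
  exact mul_le_mul (neg_le_neg hl) (hexNorm_le_iff.1 le_rfl).2.2 (abs_nonneg _) (by linarith)

lemma abs_add_three_sub_le (hx : IsOrbit c x) (hc : -1 ≤ c) (hbox : ∀ n, x n ∈ Icc c 0) {n : ℕ}
    {N : ℝ} (h₀ : |x (n + 1) - x n| ≤ N) (h₁ : |x (n + 2) - x (n + 1)| ≤ N) :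
    |x (n + 3) - x (n + 1)| ≤ N := by
  have hneg : 0 ≤ -x (n + 1) := neg_nonneg.2 (hbox _).2
  have hpos : 0 ≤ 1 + x (n + 1) := by linarith [(hbox (n + 1)).1]
  calc |x (n + 3) - x (n + 1)|
      = |(1 + x (n + 1)) * (x (n + 2) - x (n + 1)) - -x (n + 1) * (x (n + 1) - x n)| := by
        congr 1
        linear_combination hx.sub_eq_mul_sub n
    _ ≤ (1 + x (n + 1)) * |x (n + 2) - x (n + 1)| + -x (n + 1) * |x (n + 1) - x n| := by
        refine (abs_sub _ _).trans_eq ?_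
        rw [abs_mul, abs_mul, abs_of_nonneg hpos, abs_of_nonneg hneg]
    _ ≤ (1 + x (n + 1)) * N + -x (n + 1) * N := by gcongr
    _ = N := by ring

lemma hexNorm_antitone (hx : IsOrbit c x) (hc : -1 ≤ c) (hbox : ∀ n, x n ∈ Icc c 0) :
    Antitone (hexNorm x) := by
  refine antitone_nat_of_succ_le fun n => ?_
  obtain ⟨h₀, h₁, -⟩ := hexNorm_le_iff.1 (le_refl (hexNorm x n))
  have hpos : 0 ≤ hexNorm x n := (abs_nonneg _).trans h₀
  have h₂ : |x (n + 3) - x (n + 2)| ≤ hexNorm x n :=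
    (hx.abs_sub_le_mul_hexNorm hbox n).trans (mul_le_of_le_one_left hpos (by linarith))
  exact hexNorm_le_iff.2 ⟨h₁, h₂, hx.abs_add_three_sub_le hc hbox h₀ h₁⟩

lemma hexNorm_add_three_le (hx : IsOrbit c x) (hc : -1 ≤ c) (hbox : ∀ n, x n ∈ Icc c 0) (n : ℕ) :
    hexNorm x (n + 3) ≤ -c * hexNorm x n := by
  have hc' : 0 ≤ -c := neg_nonneg.2 ((hbox 0).1.trans (hbox 0).2)
  have hdiff : ∀ m, n ≤ m → |x (m + 3) - x (m + 2)| ≤ -c * hexNorm x n := fun m hm =>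
    (hx.abs_sub_le_mul_hexNorm hbox m).trans
      (mul_le_mul_of_nonneg_left (hx.hexNorm_antitone hc hbox hm) hc')
  have h₂ := hdiff n le_rfl
  have h₃ := hdiff (n + 1) (by lia)
  have h₄ := hdiff (n + 2) (by lia)
  exact hexNorm_le_iff.2 ⟨h₃, h₄, hx.abs_add_three_sub_le hc hbox h₂ h₃⟩

lemma exists_tendsto_of_mem_Icc (hx : IsOrbit c x) (hc : -1 < c) (hbox : ∀ n, x n ∈ Icc c 0) :
    ∃ a, Tendsto x atTop (𝓝 a) := by
  have hle : ∀ n, |x (n + 1) - x n| ≤ hexNorm x n := fun n => le_max_left _ _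
  have hsum : Summable (hexNorm x) :=
    summable_of_add_le_mul (fun n => (abs_nonneg _).trans (hle n)) (by linarith)
      (hx.hexNorm_add_three_le hc.le hbox)
  refine cauchySeq_tendsto_of_complete (cauchySeq_of_dist_le_of_summable _ (fun n => ?_) hsum)
  rw [dist_comm, Real.dist_eq]
  exact hle n

lemma convergesToCycle_of_mem_Icc (hx : IsOrbit c x) (hc : -1 < c) {N : ℕ}
    (h₀ : x N ∈ Icc c 0) (h₁ : x (N + 1) ∈ Icc c 0) : ConvergesToCycle c x := by
  have hN : IsOrbit c fun n => x (n + N) := hx.shift N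
  refine .of_shift N (.inl (hN.exists_tendsto_of_mem_Icc hc (hN.mem_Icc hc.le ?_ ?_)))
  · rwa [zero_add]
  · rwa [add_comm]

end IsOrbit

end InvariantBox

section Classification

variable {c : ℝ} {x : ℕ → ℝ}

namespace IsOrbit

lemma le_and_le_of_nonpos_of_nonneg (hx : IsOrbit c x) (hc : c ≤ 0) {m : ℕ} (hm : x m ≤ 0)
    (hm' : 0 ≤ x (m + 1)) : x (m + 2) ≤ c ∧ x (m + 3) ≤ c := by
  have h₂ : x (m + 2) ≤ c := by
    rw [hx]
    linarith [mul_nonpos_of_nonneg_of_nonpos hm' hm]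
  refine ⟨h₂, ?_⟩
  rw [hx (m + 1)]
  linarith [mul_nonpos_of_nonpos_of_nonneg (h₂.trans hc) hm']

lemma mem_Icc_of_le_of_neg (hx : IsOrbit c x) (hc : c < 0) {n : ℕ} (h₀ : x n ≤ c)
    (h₁ : x (n + 1) ≤ c) (h₂ : x (n + 2) < 0) :
    x (n + 2) ∈ Icc c 0 ∧ x (n + 3) ∈ Icc c 0 := by
  have hx₂ : x (n + 2) = x (n + 1) * x n + c := hx n
  have hx₃ : x (n + 3) = x (n + 2) * x (n + 1) + c := hx (n + 1)
  have hge₁ : -1 ≤ x (n + 1) := by nlinarith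
  have hneg₁ : x (n + 1) ≤ 0 := h₁.trans hc.le
  have hge₂ : c ≤ x (n + 2) := by
    linarith [mul_nonneg_of_nonpos_of_nonpos hneg₁ (h₀.trans hc.le)]
  refine ⟨⟨hge₂, h₂.le⟩, ?_, ?_⟩
  · linarith [mul_nonneg_of_nonpos_of_nonpos h₂.le hneg₁]
  · linarith [mul_le_mul_of_nonpos_left hge₁ h₂.le]

lemma convergesToCycle_of_le_of_le (hx : IsOrbit c x) (hc1 : -1 < c) (hc2 : c < 0)
    (hb : Bornology.IsBounded (range x)) (h₀ : x 0 ≤ c) (h₁ : x 1 ≤ c) :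
    ConvergesToCycle c x := by
  by_cases hbox : ∃ n, x n ≤ c ∧ x (n + 1) ≤ c ∧ x (n + 2) < 0
  · obtain ⟨n, hn, hn', hneg⟩ := hbox
    obtain ⟨hmem, hmem'⟩ := hx.mem_Icc_of_le_of_neg hc2 hn hn' hneg
    exact hx.convergesToCycle_of_mem_Icc hc1 hmem hmem'
  push Not at hbox
  have hle : ∀ k, x (3 * k) ≤ c ∧ x (3 * k + 1) ≤ c := fun k => by
    induction k with
    | zero => exact ⟨h₀, h₁⟩
    | succ k ih =>
      exact hx.le_and_le_of_nonpos_of_nonneg hc2.le (ih.2.trans hc2.le) (hbox _ ih.1 ih.2)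
  have hsign : ∀ n, 0 ≤ threeCycle 0 n * x n :=
    forall_zero_le_threeCycle_zero_mul_iff.2 fun k =>
      ⟨(hle k).1.trans hc2.le, (hle k).2.trans hc2.le, hbox _ (hle k).1 (hle k).2⟩
  exact .inr ⟨0, hx.tendsto_sub_threeCycle hc2 hb hsign⟩

lemma convergesToCycle_of_forall_neg (hx : IsOrbit c x) (hc : -1 < c) {N : ℕ}
    (hneg : ∀ n, N ≤ n → x n < 0) : ConvergesToCycle c x := by
  have hmem : ∀ n, N ≤ n → x (n + 2) ∈ Icc c 0 := fun n hn => by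
    refine ⟨?_, (hneg _ (by lia)).le⟩
    rw [hx]
    linarith [mul_pos_of_neg_of_neg (hneg (n + 1) (by lia)) (hneg n hn)]
  exact hx.convergesToCycle_of_mem_Icc hc (hmem N le_rfl) (hmem (N + 1) (by lia))

theorem convergesToCycle (hx : IsOrbit c x) (hc1 : -1 < c) (hc2 : c < 0)
    (hb : Bornology.IsBounded (range x)) : ConvergesToCycle c x := by
  by_cases hnonneg : ∀ n, 0 ≤ x n
  · exact .inl (hx.exists_tendsto_of_nonneg hb hnonneg)
  by_cases hchange : ∃ m, x m < 0 ∧ 0 ≤ x (m + 1)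
  · obtain ⟨m, hm, hm'⟩ := hchange
    obtain ⟨h₂, h₃⟩ := hx.le_and_le_of_nonpos_of_nonneg hc2.le hm.le hm'
    have hb' : Bornology.IsBounded (range fun n => x (n + (m + 2))) :=
      hb.subset (range_comp_subset_range (· + (m + 2)) x)
    refine .of_shift (m + 2) ((hx.shift (m + 2)).convergesToCycle_of_le_of_le hc1 hc2 hb' ?_ ?_)
    · rwa [zero_add]
    · rwa [add_comm]
  push Not at hnonneg hchange
  obtain ⟨N, hN⟩ := hnonneg
  exact hx.convergesToCycle_of_forall_neg hc1 fun n hn =>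
    Nat.le_induction hN (fun k _ => hchange k) n hn

end IsOrbit

lemma eq_a1_or_eq_a2 (hc : c ≤ 1 / 4) {a : ℝ} (h : a = a * a + c) : a = a1 c ∨ a = a2 c := by
  have hdiscrim : discrim 1 (-1) c = √(1 - 4 * c) * √(1 - 4 * c) := by
    rw [Real.mul_self_sqrt (by linarith), discrim]
    ring
  have hroot : 1 * (a * a) + -1 * a + c = 0 := by linarith
  simpa [a1, a2, or_comm] using (quadratic_eq_zero_iff one_ne_zero hdiscrim a).1 hroot

lemma isBounded_range_of_tendsto_sub_threeCycle {r : ℕ}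
    (h : Tendsto (fun n => x n - threeCycle c (n + r)) atTop (𝓝 0)) :
    Bornology.IsBounded (range x) := by
  refine ((Metric.isBounded_range_of_tendsto _ h).add (isBounded_range_threeCycle c)).subset ?_
  exact range_subset_iff.2 fun n => ⟨_, mem_range_self n, _, mem_range_self (n + r), by simp⟩

lemma not_tendsto_of_tendsto_sub_threeCycle (hc : c ≠ -2) {r : ℕ}
    (h : Tendsto (fun n => x n - threeCycle c (n + r)) atTop (𝓝 0)) (a : ℝ) :
    ¬ Tendsto x atTop (𝓝 a) := fun ha => by
  have hcycle : Tendsto (fun n => threeCycle c (n + r)) atTop (𝓝 a) := by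
    simpa only [sub_sub_cancel, sub_zero] using ha.sub h
  exact not_tendsto_threeCycle hc a ((tendsto_add_atTop_iff_nat r).1 hcycle)

theorem IsOrbit.isBounded_and_not_tendsto_iff (hx : IsOrbit c x) (hc1 : -1 < c) (hc2 : c < 0) :
    (Bornology.IsBounded (range x) ∧
        ¬(Tendsto x atTop (𝓝 (a1 c)) ∨ Tendsto x atTop (𝓝 (a2 c)))) ↔
      ∃ r, Tendsto (fun n => x n - threeCycle c (n + r)) atTop (𝓝 0) := by
  constructor
  · rintro ⟨hb, hfixed⟩
    refine (hx.convergesToCycle hc1 hc2 hb).resolve_left fun ⟨a, ha⟩ => hfixed ?_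
    rcases eq_a1_or_eq_a2 (by linarith) (hx.eq_mul_self_add_of_tendsto ha) with rfl | rfl
    · exact .inl ha
    · exact .inr ha
  · rintro ⟨r, h⟩
    have hnot := not_tendsto_of_tendsto_sub_threeCycle (by linarith) h
    exact ⟨isBounded_range_of_tendsto_sub_threeCycle h, not_or.2 ⟨hnot _, hnot _⟩⟩

lemma exists_tendsto_sub_threeCycle_iff :
    (∃ r, Tendsto (fun n => x n - threeCycle c (n + r)) atTop (𝓝 0)) ↔
      (Tendsto (fun n => x n - threeCycle c n) atTop (𝓝 0) ∨
        Tendsto (fun n => x n - threeCycle c (n + 1)) atTop (𝓝 0)) ∨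
        Tendsto (fun n => x n - threeCycle c (n + 2)) atTop (𝓝 0) := by
  constructor
  · rintro ⟨r, h⟩
    simp only [← threeCycle_add_mod c _ r] at h
    obtain hr | hr | hr : r % 3 = 0 ∨ r % 3 = 1 ∨ r % 3 = 2 := by lia
    all_goals rw [hr] at h
    · exact .inl (.inl h)
    · exact .inl (.inr h)
    · exact .inr h
  · rintro ((h | h) | h)
    exacts [⟨0, h⟩, ⟨1, h⟩, ⟨2, h⟩]

end Classification

section PlanarOrbits

/-- The scalar orbit of `z`: the second coordinates of its iterates under `fc c`. -/
noncomputable def orbitSeq (c : ℝ) (z : ℝ × ℝ) (n : ℕ) : ℝ := ((fc c)^[n] z).2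

variable {c : ℝ} {z : ℝ × ℝ}

lemma iterate_fc_eq (c : ℝ) (z : ℝ × ℝ) (n : ℕ) :
    (fc c)^[n] z = (orbitSeq c z (n + 1), orbitSeq c z n) := by
  rw [orbitSeq, Function.iterate_succ_apply']
  rfl

lemma isOrbit_orbitSeq (c : ℝ) (z : ℝ × ℝ) : IsOrbit c (orbitSeq c z) := fun n => by
  have h : (fc c)^[n + 1] z = fc c (orbitSeq c z (n + 1), orbitSeq c z n) := by
    rw [Function.iterate_succ_apply', iterate_fc_eq]
  rw [iterate_fc_eq] at h
  exact congrArg Prod.fst h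

lemma tendsto_prodMk_succ_iff {α : Type*} [TopologicalSpace α] {u : ℕ → α} {a : α} :
    Tendsto (fun n => (u (n + 1), u n)) atTop (𝓝 (a, a)) ↔ Tendsto u atTop (𝓝 a) :=
  ⟨fun h => h.snd_nhds, fun h => ((tendsto_add_atTop_iff_nat 1).2 h).prodMk_nhds h⟩

lemma tendsto_iterate_fc_iff {a : ℝ} :
    Tendsto (fun n => (fc c)^[n] z) atTop (𝓝 (a, a)) ↔ Tendsto (orbitSeq c z) atTop (𝓝 a) := by
  simp only [iterate_fc_eq, tendsto_prodMk_succ_iff]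

lemma tendsto_norm_iterate_fc_sub_iff {y : ℕ → ℝ} (hy : IsOrbit c y) {a b : ℝ} (h₁ : y 1 = a)
    (h₀ : y 0 = b) :
    Tendsto (fun n => ‖(fc c)^[n] z - (fc c)^[n] (a, b)‖) atTop (𝓝 0) ↔
      Tendsto (fun n => orbitSeq c z n - y n) atTop (𝓝 0) := by
  subst h₁ h₀
  simp only [← tendsto_zero_iff_norm_tendsto_zero, hy.iterate_fc, iterate_fc_eq c z,
    Prod.mk_sub_mk]
  exact tendsto_prodMk_succ_iff (u := fun n => orbitSeq c z n - y n)

lemma exists_norm_iterate_fc_le_iff :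
    (∃ M : ℝ, ∀ n : ℕ, ‖(fc c)^[n] z‖ ≤ M) ↔ Bornology.IsBounded (range (orbitSeq c z)) := by
  simp only [isBounded_iff_forall_norm_le, forall_mem_range, iterate_fc_eq c z, Prod.norm_mk,
    max_le_iff]
  exact ⟨fun ⟨M, h⟩ => ⟨M, fun n => (h n).2⟩, fun ⟨M, h⟩ => ⟨M, fun n => ⟨h (n + 1), h n⟩⟩⟩

end PlanarOrbits

theorem stmt5 (c : ℝ) (hc1 : -1 < c) (hc2 : c < 0) :
    {z : ℝ × ℝ | ∃ M : ℝ, ∀ n : ℕ, ‖(fc c)^[n] z‖ ≤ M} \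
      ({z : ℝ × ℝ | Tendsto (fun n => (fc c)^[n] z) atTop (𝓝 (a1 c, a1 c))} ∪
       {z : ℝ × ℝ | Tendsto (fun n => (fc c)^[n] z) atTop (𝓝 (a2 c, a2 c))}) =
      {z : ℝ × ℝ | Tendsto (fun n => ‖(fc c)^[n] z - (fc c)^[n] (-1, -1)‖) atTop (𝓝 0)} ∪
      {z : ℝ × ℝ | Tendsto (fun n => ‖(fc c)^[n] z - (fc c)^[n] (1 + c, -1)‖) atTop (𝓝 0)} ∪
      {z : ℝ × ℝ | Tendsto (fun n => ‖(fc c)^[n] z - (fc c)^[n] (-1, 1 + c)‖) atTop (𝓝 0)} := by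
  ext z
  have hcycle := isOrbit_threeCycle c
  have hp := tendsto_norm_iterate_fc_sub_iff (z := z) hcycle (a := -1) (b := -1)
    (by simp [threeCycle]) (by simp [threeCycle])
  have hfp := tendsto_norm_iterate_fc_sub_iff (z := z) (hcycle.shift 1) (a := 1 + c) (b := -1)
    (by simp [threeCycle]) (by simp [threeCycle])
  have hffp := tendsto_norm_iterate_fc_sub_iff (z := z) (hcycle.shift 2) (a := -1) (b := 1 + c)
    (by simp [threeCycle]) (by simp [threeCycle])
  simp only [Set.mem_sdiff, mem_union, mem_ofPred_eq, exists_norm_iterate_fc_le_iff,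
    tendsto_iterate_fc_iff, hp, hfp, hffp, ← exists_tendsto_sub_threeCycle_iff]
  exact (isOrbit_orbitSeq c z).isBounded_and_not_tendsto_iff hc1 hc2
end

section
/- Let c ∈ ℝ with -1 < c < 0. There exists N ∈ ℕ such that fⁿ(𝓡) ⊆ R' for all n ≥ N. -/
open Set Filter Topology

/-!
The region `R'` is forward invariant: `f` maps `R₁` into `R₂`, `R₂` into `R₂ ∪ R₃` and `R₃` into
`R₁`. Since `a₂² = a₂ - c`, we have `1 - (1 + c) a₂ = (a₂ - 1)² (a₂ + 1) ≥ 0`, so `f` maps `R₀` into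
the union of `R'` and the square `[0, 1 + c]²`. In that square `y ≤ 1`, hence `xy + c ≤ x - |c|`: as
long as an orbit stays there its first coordinate decreases by at least `|c|` at each step, so the
number of steps it can stay is bounded uniformly in the starting point.
-/

section Escape

variable {α M : Type*} {f : α → α} {S T : Set α} {φ : α → M} {ε : M}

theorem iterate_mem_or_iterate_mem_and_add_nsmul_le
    [AddCommMonoid M] [Preorder M] [IsOrderedAddMonoid M] (hS : MapsTo f S S)
    (hT : ∀ z ∈ T, f z ∈ S ∨ f z ∈ T ∧ φ (f z) + ε ≤ φ z) {z : α} (hz : z ∈ T) (n : ℕ) :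
    f^[n] z ∈ S ∨ f^[n] z ∈ T ∧ φ (f^[n] z) + n • ε ≤ φ z := by
  induction n with
  | zero => exact Or.inr ⟨hz, by simp⟩
  | succ n ih =>
    rw [Function.iterate_succ_apply']
    rcases ih with hnS | ⟨hnT, hn⟩
    · exact Or.inl (hS hnS)
    · refine (hT _ hnT).imp_right fun ⟨hmem, hdrop⟩ ↦ ⟨hmem, ?_⟩
      calc φ (f (f^[n] z)) + (n + 1) • ε
          = φ (f (f^[n] z)) + ε + n • ε := by rw [succ_nsmul', add_assoc]
        _ ≤ φ (f^[n] z) + n • ε := by gcongr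
        _ ≤ φ z := hn

theorem exists_forall_ge_mapsTo_iterate_of_add_le
    [AddCommGroup M] [LinearOrder M] [IsOrderedAddMonoid M] [Archimedean M] (hε : 0 < ε)
    (hS : MapsTo f S S) (hT : ∀ z ∈ T, f z ∈ S ∨ f z ∈ T ∧ φ (f z) + ε ≤ φ z)
    (hbelow : BddBelow (φ '' T)) (habove : BddAbove (φ '' T)) :
    ∃ N : ℕ, ∀ n ≥ N, MapsTo f^[n] (S ∪ T) S := by
  obtain ⟨a, ha⟩ := hbelow
  obtain ⟨b, hb⟩ := habove
  obtain ⟨N, hN⟩ := exists_lt_nsmul hε (b - a)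
  refine ⟨N, fun n hn ↦ MapsTo.union (hS.iterate n) fun z hz ↦ ?_⟩
  refine (iterate_mem_or_iterate_mem_and_add_nsmul_le hS hT hz n).resolve_right ?_
  rintro ⟨hnT, hdrop⟩
  have hlong : b - a < n • ε := hN.trans_le (nsmul_le_nsmul_left hε.le hn)
  have hshort : a + n • ε ≤ b := calc
    a + n • ε ≤ φ (f^[n] z) + n • ε := by gcongr; exact ha (mem_image_of_mem φ hnT)
    _ ≤ φ z := hdrop
    _ ≤ b := hb (mem_image_of_mem φ hz)
  exact hlong.not_ge (le_sub_iff_add_le'.mpr hshort)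

end Escape

section a2

variable {c : ℝ}

theorem a2_pos (c : ℝ) : 0 < a2 c := by
  unfold a2
  positivity

theorem a2_sq (hc : c ≤ 1 / 4) : a2 c ^ 2 = a2 c - c := by
  have hsq : √(1 - 4 * c) ^ 2 = 1 - 4 * c := Real.sq_sqrt (by linarith)
  unfold a2
  linear_combination hsq / 4

theorem one_add_mul_a2_le_one (hc : c ≤ 1 / 4) : (1 + c) * a2 c ≤ 1 := by
  have hfactor : 1 - (1 + c) * a2 c = (a2 c - 1) ^ 2 * (a2 c + 1) := by
    linear_combination (-(a2 c)) * a2_sq hc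
  have hnonneg : 0 ≤ (a2 c - 1) ^ 2 * (a2 c + 1) := by
    have := a2_pos c
    positivity
  linarith

end a2

/-- The region `R' = R₁ ∪ R₂ ∪ R₃` in which all orbits under consideration end up. -/
def trappingRegion (c : ℝ) : Set (ℝ × ℝ) :=
  Icc (-1 : ℝ) 0 ×ˢ Icc (0 : ℝ) (1 + c) ∪ Icc (-1 : ℝ) 0 ×ˢ Icc (-1 : ℝ) 0 ∪
    Icc (0 : ℝ) (1 + c) ×ˢ Icc (-1 : ℝ) 0

/-- The rectangle `[0, 1 + c] × [0, b]` in the first quadrant. It is `R₀` for `b = a₂`, and the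
square that orbits starting in `R₀` must cross to reach `R'` for `b = 1 + c`. -/
def firstQuadrantRectangle (c b : ℝ) : Set (ℝ × ℝ) := Icc (0 : ℝ) (1 + c) ×ˢ Icc (0 : ℝ) b

section Dynamics

variable {c b : ℝ}

theorem mapsTo_fc_secondQuadrant (hc : c ≤ 0) :
    MapsTo (fc c) (Icc (-1) 0 ×ˢ Icc 0 (1 + c)) (Icc (-1) 0 ×ˢ Icc (-1) 0) := by
  rintro ⟨x, y⟩ ⟨⟨hx₁, hx₀⟩, hy₀, hy₁⟩
  have hlower : -1 ≤ x * y + c := by nlinarith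
  have hupper : x * y + c ≤ 0 := by nlinarith
  exact ⟨⟨hlower, hupper⟩, hx₁, hx₀⟩

theorem mapsTo_fc_thirdQuadrant (hc : -1 ≤ c) :
    MapsTo (fc c) (Icc (-1) 0 ×ˢ Icc (-1) 0)
      (Icc (-1) 0 ×ˢ Icc (-1) 0 ∪ Icc 0 (1 + c) ×ˢ Icc (-1) 0) := by
  rintro ⟨x, y⟩ ⟨⟨hx₁, hx₀⟩, hy₁, hy₀⟩
  have hlower : -1 ≤ x * y + c := by nlinarith
  have hupper : x * y + c ≤ 1 + c := by nlinarith
  rcases le_total (x * y + c) 0 with hneg | hpos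
  · exact Or.inl ⟨⟨hlower, hneg⟩, hx₁, hx₀⟩
  · exact Or.inr ⟨⟨hpos, hupper⟩, hx₁, hx₀⟩

theorem mapsTo_fc_fourthQuadrant (hc : c ≤ 0) :
    MapsTo (fc c) (Icc 0 (1 + c) ×ˢ Icc (-1) 0) (Icc (-1) 0 ×ˢ Icc 0 (1 + c)) := by
  rintro ⟨x, y⟩ ⟨⟨hx₀, hx₁⟩, hy₁, hy₀⟩
  have hlower : -1 ≤ x * y + c := by nlinarith
  have hupper : x * y + c ≤ 0 := by nlinarith
  exact ⟨⟨hlower, hupper⟩, hx₀, hx₁⟩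

theorem mapsTo_fc_trappingRegion (hc₁ : -1 ≤ c) (hc₀ : c ≤ 0) :
    MapsTo (fc c) (trappingRegion c) (trappingRegion c) := by
  rintro z ((hz | hz) | hz)
  · exact Or.inl (Or.inr (mapsTo_fc_secondQuadrant hc₀ hz))
  · exact (mapsTo_fc_thirdQuadrant hc₁ hz).imp_left Or.inr
  · exact Or.inl (Or.inl (mapsTo_fc_fourthQuadrant hc₀ hz))

theorem mapsTo_fc_firstQuadrantRectangle (hb : (1 + c) * b ≤ 1) :
    MapsTo (fc c) (firstQuadrantRectangle c b)
      (trappingRegion c ∪ firstQuadrantRectangle c (1 + c)) := by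
  rintro ⟨x, y⟩ ⟨hx, hy₀, hyb⟩
  have hc : 0 ≤ 1 + c := hx.1.trans hx.2
  have hxy₀ : 0 ≤ x * y := mul_nonneg hx.1 hy₀
  have hxy₁ : x * y ≤ 1 := (mul_le_mul hx.2 hyb hy₀ hc).trans hb
  rcases le_total (x * y + c) 0 with hneg | hpos
  · exact Or.inl (Or.inl (Or.inl ⟨⟨by simp only [fc]; linarith, hneg⟩, hx⟩))
  · exact Or.inr ⟨⟨hpos, by simp only [fc]; linarith⟩, hx⟩

theorem fc_fst_add_neg_le {z : ℝ × ℝ} (hx : 0 ≤ z.1) (hy : z.2 ≤ 1) :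
    (fc c z).1 + -c ≤ z.1 := by
  simpa [fc] using mul_le_of_le_one_right hx hy

theorem exists_forall_ge_mapsTo_iterate_fc_square (hc₁ : -1 ≤ c) (hc₀ : c < 0) :
    ∃ N : ℕ, ∀ n ≥ N, MapsTo (fc c)^[n]
      (trappingRegion c ∪ firstQuadrantRectangle c (1 + c)) (trappingRegion c) := by
  have hsquare : (1 + c) * (1 + c) ≤ 1 := by nlinarith
  refine exists_forall_ge_mapsTo_iterate_of_add_le (φ := Prod.fst) (neg_pos.mpr hc₀)
    (mapsTo_fc_trappingRegion hc₁ hc₀.le) (fun z hz ↦ ?_) ⟨0, ?_⟩ ⟨1 + c, ?_⟩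
  · exact (mapsTo_fc_firstQuadrantRectangle hsquare hz).imp_right fun hfz ↦
      ⟨hfz, fc_fst_add_neg_le hz.1.1 (hz.2.2.trans (by linarith))⟩
  · rintro _ ⟨z, hz, rfl⟩
    exact hz.1.1
  · rintro _ ⟨z, hz, rfl⟩
    exact hz.1.2

end Dynamics

theorem stmt7 (c : ℝ) (hc1 : -1 < c) (hc2 : c < 0) :
    ∃ N : ℕ, ∀ n ≥ N,
      (fc c)^[n] '' (Icc (-1 : ℝ) 0 ×ˢ Icc (0 : ℝ) (1 + c) ∪ Icc (-1 : ℝ) 0 ×ˢ Icc (-1 : ℝ) 0 ∪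
          Icc (0 : ℝ) (1 + c) ×ˢ Icc (-1 : ℝ) 0 ∪ Icc (0 : ℝ) (1 + c) ×ˢ Icc (0 : ℝ) (a2 c)) ⊆
        Icc (-1 : ℝ) 0 ×ˢ Icc (0 : ℝ) (1 + c) ∪ Icc (-1 : ℝ) 0 ×ˢ Icc (-1 : ℝ) 0 ∪
          Icc (0 : ℝ) (1 + c) ×ˢ Icc (-1 : ℝ) 0 := by
  change ∃ N : ℕ, ∀ n ≥ N,
    (fc c)^[n] '' (trappingRegion c ∪ firstQuadrantRectangle c (a2 c)) ⊆ trappingRegion c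
  have hfirst : MapsTo (fc c) (trappingRegion c ∪ firstQuadrantRectangle c (a2 c))
      (trappingRegion c ∪ firstQuadrantRectangle c (1 + c)) :=
    ((mapsTo_fc_trappingRegion hc1.le hc2.le).mono_right subset_union_left).union
      (mapsTo_fc_firstQuadrantRectangle (one_add_mul_a2_le_one (by linarith)))
  obtain ⟨N, hN⟩ := exists_forall_ge_mapsTo_iterate_fc_square hc1.le hc2
  refine ⟨N + 1, fun n hn ↦ ?_⟩
  obtain ⟨m, rfl⟩ := Nat.exists_eq_add_of_le' hn
  rw [← add_assoc, Function.iterate_succ]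
  exact ((hN (m + N) (Nat.le_add_left N m)).comp hfirst).image_subset
end
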